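/- arXiv:1506.07587 — 3 statements merged into one kernel-verified Lean document; each statement's English description precedes it below -/
import Mathlib

section
/- Let S be a finitely generated reduced cancellative commutative monoid and n ∈ S with at least two factorizations. Let b be the minimum catenary degree among the Betti elements of S dividing n. If a and b' are distinct factorizations of n with d(a, b') < b, then there exists a factorization x of n with |x| > max(|a|, |b'|). -/
/-- The set of factorizations of `n` in terms of the generators `gens`. -/
def ZsetM {S : Type*} [AddCancelCommMonoid S] {k : ℕ} (gens : Fin k → S) (n : S) :
    Set (Fin k → ℕ) :=
  {a | ∑ i, a i • gens i = n}

/-- The length of a factorization. -/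
def flen {k : ℕ} (a : Fin k → ℕ) : ℕ := ∑ i, a i

/-- The distance between two factorizations:
`max (|a - gcd(a,b)|, |b - gcd(a,b)|)` (componentwise gcd = min). -/
def fdist {k : ℕ} (a b : Fin k → ℕ) : ℕ :=
  max (∑ i, (a i - b i)) (∑ i, (b i - a i))

/-- There is an `N`-chain of factorizations within `Z` from `a` to `b`. -/
def IsNChain {k : ℕ} (Z : Set (Fin k → ℕ)) (N : ℕ) (a b : Fin k → ℕ) : Prop :=
  ∃ l : List (Fin k → ℕ), l.head? = some a ∧ l.getLast? = some b ∧
    (∀ x ∈ l, x ∈ Z) ∧ l.Chain' (fun x y => fdist x y ≤ N)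

/-- The catenary degree of `n`: the least `N` such that any two factorizations
of `n` are connected by an `N`-chain. -/
noncomputable def catDegM {S : Type*} [AddCancelCommMonoid S] {k : ℕ}
    (gens : Fin k → S) (n : S) : ℕ :=
  sInf {N | ∀ a ∈ ZsetM gens n, ∀ b ∈ ZsetM gens n, IsNChain (ZsetM gens n) N a b}

/-- `n` is a Betti element: the graph on `Z(n)` joining factorizations with
nonzero componentwise gcd is disconnected. -/
def IsBettiM {S : Type*} [AddCancelCommMonoid S] {k : ℕ} (gens : Fin k → S)
    (n : S) : Prop :=
  ∃ a ∈ ZsetM gens n, ∃ b ∈ ZsetM gens n,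
    ¬ Relation.ReflTransGen
      (fun x y => x ∈ ZsetM gens n ∧ y ∈ ZsetM gens n ∧ ∃ i, min (x i) (y i) ≠ 0) a b

/-!
Suppose every factorization of `n` has length at most `max |a| |b'|`. Cancelling the common part
`gcd(a, b')` leaves two distinct factorizations of a divisor `m` of `n`, and every factorization of
`m` then has length at most `d(a, b')`. As long as such an `m` is not a Betti element, some edge of
its factorization graph joins two distinct factorizations, and cancelling their nonzero common part
passes to a divisor with a strictly smaller bound on lengths. The descent ends at a Betti element,
whose catenary degree is at most the length of its longest factorization, hence at most `d(a, b')`.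
-/

lemma eq_of_reflTransGen_of_forall_eq {α : Type*} {r : α → α → Prop} {a b : α}
    (hr : ∀ x y, r x y → x = y) (hab : Relation.ReflTransGen r a b) : a = b := by
  induction hab with
  | refl => rfl
  | tail _ hbc ih => exact ih.trans (hr _ _ hbc)

lemma sub_add_inf_eq_left {ι : Type*} (x y : ι → ℕ) : x - y + x ⊓ y = x :=
  funext fun _ => tsub_add_min

lemma sub_ne_sub_swap {ι : Type*} {x y : ι → ℕ} (hxy : x ≠ y) : x - y ≠ y - x := fun h =>
  hxy <| calc
    x = x - y + x ⊓ y := (sub_add_inf_eq_left x y).symm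
    _ = y - x + y ⊓ x := by rw [h, inf_comm]
    _ = y := sub_add_inf_eq_left y x

section Length

variable {k : ℕ}

lemma flen_add (x y : Fin k → ℕ) : flen (x + y) = flen x + flen y :=
  Finset.sum_add_distrib

lemma flen_pos_of_apply_ne_zero {x : Fin k → ℕ} {i : Fin k} (hi : x i ≠ 0) : 0 < flen x :=
  Finset.sum_pos' (fun _ _ => Nat.zero_le _) ⟨i, Finset.mem_univ i, Nat.pos_of_ne_zero hi⟩

lemma fdist_eq_max_flen_sub (x y : Fin k → ℕ) : fdist x y = max (flen (x - y)) (flen (y - x)) :=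
  rfl

lemma fdist_add_flen_inf (x y : Fin k → ℕ) :
    fdist x y + flen (x ⊓ y) = max (flen x) (flen y) := by
  have hx : flen (x - y) + flen (x ⊓ y) = flen x := by rw [← flen_add, sub_add_inf_eq_left]
  have hy : flen (y - x) + flen (x ⊓ y) = flen y := by
    rw [← flen_add, inf_comm, sub_add_inf_eq_left]
  rw [fdist_eq_max_flen_sub, max_add, hx, hy]

lemma fdist_le_max_flen (x y : Fin k → ℕ) : fdist x y ≤ max (flen x) (flen y) :=
  (Nat.le_add_right _ _).trans_eq (fdist_add_flen_inf x y)

end Length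

section Factorization

variable {S : Type*} [AddCancelCommMonoid S] {k : ℕ} {gens : Fin k → S} {m n t : S}
  {x y : Fin k → ℕ}

lemma add_mem_ZsetM (hx : x ∈ ZsetM gens m) (hy : y ∈ ZsetM gens t) :
    x + y ∈ ZsetM gens (m + t) :=
  calc
    ∑ i, (x i + y i) • gens i = ∑ i, x i • gens i + ∑ i, y i • gens i := by
      simp only [add_smul, Finset.sum_add_distrib]
    _ = m + t := congrArg₂ (· + ·) hx hy

lemma exists_add_eq_sub_mem_ZsetM (hx : x ∈ ZsetM gens n) (hy : y ∈ ZsetM gens n) :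
    ∃ m t : S, n = m + t ∧ x - y ∈ ZsetM gens m ∧ y - x ∈ ZsetM gens m ∧
      x ⊓ y ∈ ZsetM gens t := by
  obtain ⟨m, hm⟩ : ∃ m, x - y ∈ ZsetM gens m := ⟨_, rfl⟩
  obtain ⟨m', hm'⟩ : ∃ m', y - x ∈ ZsetM gens m' := ⟨_, rfl⟩
  obtain ⟨t, ht⟩ : ∃ t, x ⊓ y ∈ ZsetM gens t := ⟨_, rfl⟩
  have hn : n = m + t := by
    rw [← hx, ← add_mem_ZsetM hm ht, sub_add_inf_eq_left]
  have hn' : n = m' + t := by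
    rw [← hy, ← add_mem_ZsetM hm' ht, inf_comm, sub_add_inf_eq_left]
  obtain rfl : m = m' := add_right_cancel (hn.symm.trans hn')
  exact ⟨m, t, hn, hm, hm', ht⟩

lemma exists_dvd_flen_add_flen_inf_le {d : ℕ} (hx : x ∈ ZsetM gens n) (hy : y ∈ ZsetM gens n)
    (hd : ∀ z ∈ ZsetM gens n, flen z ≤ d) :
    ∃ m, (∃ t, n = m + t) ∧ x - y ∈ ZsetM gens m ∧ y - x ∈ ZsetM gens m ∧
      ∀ z ∈ ZsetM gens m, flen z + flen (x ⊓ y) ≤ d := by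
  obtain ⟨m, t, rfl, hxm, hym, ht⟩ := exists_add_eq_sub_mem_ZsetM hx hy
  refine ⟨m, ⟨t, rfl⟩, hxm, hym, fun z hz => ?_⟩
  rw [← flen_add]
  exact hd _ (add_mem_ZsetM hz ht)

lemma catDegM_le_of_flen_le {d : ℕ} (hd : ∀ z ∈ ZsetM gens m, flen z ≤ d) :
    catDegM gens m ≤ d := by
  refine Nat.sInf_le fun x hx y hy => ⟨[x, y], rfl, rfl, by simp [hx, hy], ?_⟩
  exact List.isChain_pair.2 ((fdist_le_max_flen x y).trans (max_le (hd x hx) (hd y hy)))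

lemma exists_ne_flen_inf_pos_of_not_isBettiM (hn : ¬ IsBettiM gens n) (hx : x ∈ ZsetM gens n)
    (hy : y ∈ ZsetM gens n) (hxy : x ≠ y) :
    ∃ u ∈ ZsetM gens n, ∃ v ∈ ZsetM gens n, u ≠ v ∧ 0 < flen (u ⊓ v) := by
  by_contra! hshort
  refine hn ⟨x, hx, y, hy, fun hpath => hxy (eq_of_reflTransGen_of_forall_eq ?_ hpath)⟩
  rintro u v ⟨hu, hv, i, hi⟩
  by_contra huv
  exact (flen_pos_of_apply_ne_zero (x := u ⊓ v) hi).not_ge (hshort u hu v hv huv)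

lemma exists_isBettiM_dvd_flen_le {d : ℕ} (hx : x ∈ ZsetM gens n) (hy : y ∈ ZsetM gens n)
    (hxy : x ≠ y) (hd : ∀ z ∈ ZsetM gens n, flen z ≤ d) :
    ∃ m, IsBettiM gens m ∧ (∃ t, n = m + t) ∧ ∀ z ∈ ZsetM gens m, flen z ≤ d := by
  induction d using Nat.strong_induction_on generalizing n x y with
  | _ d ih =>
    by_cases hn : IsBettiM gens n
    · exact ⟨n, hn, ⟨0, (add_zero n).symm⟩, hd⟩
    obtain ⟨u, hu, v, hv, huv, hpos⟩ := exists_ne_flen_inf_pos_of_not_isBettiM hn hx hy hxy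
    obtain ⟨m, ⟨t, rfl⟩, hum, hvm, hm⟩ := exists_dvd_flen_add_flen_inf_le hu hv hd
    have hlt : d - flen (u ⊓ v) < d :=
      Nat.sub_lt_self hpos ((Nat.le_add_left _ _).trans (hm _ hum))
    obtain ⟨m', hB, ⟨t', rfl⟩, hm'⟩ :=
      ih _ hlt hum hvm (sub_ne_sub_swap huv) fun z hz => Nat.le_sub_of_add_le (hm z hz)
    exact ⟨m', hB, ⟨t' + t, add_assoc _ _ _⟩, fun z hz => (hm' z hz).trans (Nat.sub_le _ _)⟩

lemma exists_isBettiM_dvd_catDegM_le_fdist (hx : x ∈ ZsetM gens n) (hy : y ∈ ZsetM gens n)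
    (hxy : x ≠ y) (hmax : ∀ z ∈ ZsetM gens n, flen z ≤ max (flen x) (flen y)) :
    ∃ m, IsBettiM gens m ∧ (∃ t, n = m + t) ∧ catDegM gens m ≤ fdist x y := by
  obtain ⟨m, ⟨t, rfl⟩, hxm, hym, hm⟩ := exists_dvd_flen_add_flen_inf_le hx hy hmax
  have hbound : ∀ z ∈ ZsetM gens m, flen z ≤ fdist x y := fun z hz =>
    Nat.le_of_add_le_add_right ((hm z hz).trans_eq (fdist_add_flen_inf x y).symm)
  obtain ⟨m', hB, ⟨t', rfl⟩, hm'⟩ :=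
    exists_isBettiM_dvd_flen_le hxm hym (sub_ne_sub_swap hxy) hbound
  exact ⟨m', hB, ⟨t' + t, add_assoc _ _ _⟩, catDegM_le_of_flen_le hm'⟩

end Factorization

theorem exists_longer_factorization_general {S : Type*} [AddCancelCommMonoid S] {k : ℕ}
    (gens : Fin k → S) {n : S} {a b' : Fin k → ℕ} (ha : a ∈ ZsetM gens n)
    (hb' : b' ∈ ZsetM gens n) (hne : a ≠ b')
    (hlt : fdist a b' <
      sInf {c | ∃ m : S, IsBettiM gens m ∧ (∃ t : S, n = m + t) ∧ catDegM gens m = c}) :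
    ∃ x ∈ ZsetM gens n, max (flen a) (flen b') < flen x := by
  by_contra! hmax
  obtain ⟨m, hB, hmn, hle⟩ := exists_isBettiM_dvd_catDegM_le_fdist ha hb' hne hmax
  exact (hlt.trans_le (Nat.sInf_le ⟨m, hB, hmn, rfl⟩)).not_ge hle

/-- If a and b' are distinct factorizations of n with d(a, b') < b, the minimum
catenary degree among Betti elements dividing n, then there is a factorization
x of n with |x| > max(|a|, |b'|). -/
theorem exists_longer_factorization {S : Type*} [AddCancelCommMonoid S] {k : ℕ}
    (gens : Fin k → S)
    (hred : ∀ a b : S, a + b = 0 → a = 0)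
    (hgen : ∀ s : S, ∃ a : Fin k → ℕ, ∑ i, a i • gens i = s)
    (hatom : ∀ i, ∀ a : Fin k → ℕ, ∑ j, a j • gens j = gens i → a = Pi.single i 1)
    (n : S) (hn : ∃ a ∈ ZsetM gens n, ∃ b ∈ ZsetM gens n, a ≠ b)
    (a b' : Fin k → ℕ) (ha : a ∈ ZsetM gens n) (hb' : b' ∈ ZsetM gens n)
    (hne : a ≠ b')
    (hlt : fdist a b' <
      sInf {c | ∃ m : S, IsBettiM gens m ∧ (∃ t : S, n = m + t) ∧ catDegM gens m = c}) :
    ∃ x ∈ ZsetM gens n, max (flen a) (flen b') < flen x :=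
  exists_longer_factorization_general gens ha hb' hne hlt
end

section
/- In the numerical monoid S = ⟨11, 25, 29⟩, the Betti elements are exactly 58, 150, and 154, with catenary degrees c(58) = 4, c(150) = 12, and c(154) = 14; moreover c(175) = 11, so S has an element whose catenary degree differs from the catenary degree of every Betti element. -/
/-- The set of factorizations of `n` over the generators `gens`. -/
def Zset {k : ℕ} (gens : Fin k → ℕ) (n : ℕ) : Set (Fin k → ℕ) :=
  {a | ∑ i, a i * gens i = n}

/-- The catenary degree of `n`: the least `N` such that any two factorizations
of `n` are connected by an `N`-chain. -/
noncomputable def catDeg {k : ℕ} (gens : Fin k → ℕ) (n : ℕ) : ℕ :=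
  sInf {N | ∀ a ∈ Zset gens n, ∀ b ∈ Zset gens n, IsNChain (Zset gens n) N a b}

/-- `n` is a Betti element: the graph on `Z(n)` joining factorizations with
nonzero componentwise gcd is disconnected. -/
def IsBetti {k : ℕ} (gens : Fin k → ℕ) (n : ℕ) : Prop :=
  ∃ a ∈ Zset gens n, ∃ b ∈ Zset gens n,
    ¬ Relation.ReflTransGen
      (fun x y => x ∈ Zset gens n ∧ y ∈ Zset gens n ∧ ∃ i, min (x i) (y i) ≠ 0) a b

/-- The set of catenary degrees of elements of the monoid generated by `gens`. -/
def CatSet {k : ℕ} (gens : Fin k → ℕ) : Set ℕ :=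
  {c | ∃ n, (Zset gens n).Nonempty ∧ catDeg gens n = c}

/-!
Call `c` critical for the generator `gᵢ` if it is the least positive integer with
`c * gᵢ ∈ ⟨gⱼ : j ≠ i⟩`. By minimality the factorization of `c * gᵢ` by `gᵢ` alone shares no
generator with any other, so `c * gᵢ` is a Betti element. Suppose conversely that each `c * gᵢ`
also has a factorization in which all other generators occur (for three generators this is
Herzog's non-symmetric case). Of two factorizations with disjoint supports one involves a single
generator `gᵢ`, so has the form `m * gᵢ` with `c ≤ m`; if `c < m`, trading `c` copies of `gᵢ` for
the other generators connects it to every factorization, so `m = c`.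

The three Betti elements have two factorizations each, and the catenary degree is their distance.
For `175 = 7 * 25 = 8 * 11 + 3 * 29 = 11 * 11 + 25 + 29`, the step `(0, 7, 0) → (11, 1, 1)` of
length 12 coming from the Betti element `150` can be replaced by one of length 11 through
`(8, 0, 3)`, which lies within 4 of `(11, 1, 1)`; no step leaving `(0, 7, 0)` is shorter than 11.
-/

section Factorizations

variable {k : ℕ} {g : Fin k → ℕ} {m n : ℕ} {x y u : Fin k → ℕ}

lemma add_mem_Zset_iff (hy : y ∈ Zset g n) : x + y ∈ Zset g (m + n) ↔ x ∈ Zset g m := by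
  have hy : ∑ i, y i * g i = n := hy
  simp [Zset, add_mul, Finset.sum_add_distrib, hy]

lemma add_mem_Zset_of_exchange (hu : u + x ∈ Zset g n) (hx : x ∈ Zset g m) (hy : y ∈ Zset g m) :
    u + y ∈ Zset g n := by
  have hx : ∑ i, x i * g i = m := hx
  have hy : ∑ i, y i * g i = m := hy
  simpa [Zset, add_mul, Finset.sum_add_distrib, hx, hy] using hu

lemma single_mem_Zset_iff {i : Fin k} : Pi.single i m ∈ Zset g n ↔ m * g i = n := by
  simp [Zset, Pi.single_apply]

lemma zero_mem_Zset_iff : 0 ∈ Zset g n ↔ n = 0 := by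
  simp [Zset, eq_comm]

lemma eq_zero_of_mem_Zset_zero (hg : ∀ i, 0 < g i) (hx : x ∈ Zset g 0) : x = 0 := by
  funext i
  have h : ∀ j, x j = 0 ∨ g j = 0 := by simpa [Zset] using hx
  exact (h i).resolve_right (hg i).ne'

lemma mul_le_of_mem_Zset (hx : x ∈ Zset g n) (i : Fin k) : x i * g i ≤ n :=
  hx ▸ Finset.single_le_sum (f := fun j => x j * g j) (fun _ _ => Nat.zero_le _)
    (Finset.mem_univ i)

lemma Zset_eq_filter_piFinset (hg : ∀ i, 0 < g i) (n : ℕ) :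
    Zset g n = ↑{x ∈ Fintype.piFinset fun i => Finset.range (n / g i + 1) |
      ∑ i, x i * g i = n} := by
  ext x
  suffices x ∈ Zset g n → ∀ i, x i < n / g i + 1 by simpa [Zset] using this
  exact fun hx i => Nat.lt_succ_of_le <|
    (Nat.le_div_iff_mul_le (hg i)).2 (mul_le_of_mem_Zset hx i)

end Factorizations

lemma eq_single_of_forall_ne {ι M : Type*} [DecidableEq ι] [Zero M] {x : ι → M} {i : ι}
    (h : ∀ j ≠ i, x j = 0) : x = Pi.single i (x i) := by
  ext j
  rcases eq_or_ne j i with rfl | hj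
  · rw [Pi.single_eq_same]
  · rw [Pi.single_eq_of_ne hj, h j hj]

lemma exists_rel_ne_of_reflTransGen_ne {α : Type*} {r : α → α → Prop} {a b : α}
    (h : Relation.ReflTransGen r a b) (hba : b ≠ a) : ∃ y, y ≠ a ∧ r a y := by
  by_contra! hiso
  refine hba ?_
  clear hba
  induction h with
  | refl => rfl
  | tail _ hstep hx =>
    subst hx
    exact by_contra fun hy => hiso _ hy hstep

section Catenary

variable {k : ℕ} {g : Fin k → ℕ} {n N : ℕ} {a b z : Fin k → ℕ}

lemma fdist_self (a : Fin k → ℕ) : fdist a a = 0 := by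
  simp [fdist]

lemma fdist_comm (a b : Fin k → ℕ) : fdist a b = fdist b a :=
  max_comm _ _

lemma isNChain_iff_reflTransGen {Z : Set (Fin k → ℕ)} :
    IsNChain Z N a b ↔
      a ∈ Z ∧ Relation.ReflTransGen (fun x y => x ∈ Z ∧ y ∈ Z ∧ fdist x y ≤ N) a b := by
  constructor
  · rintro ⟨l, hhead, hlast, hmem, hchain⟩
    obtain ⟨t, rfl⟩ := List.head?_eq_some_iff.1 hhead
    refine ⟨hmem a (by simp), ?_⟩
    have hlast : (a :: t).getLast (List.cons_ne_nil a t) = b := by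
      rwa [List.getLast?_eq_some_getLast (List.cons_ne_nil a t), Option.some_inj] at hlast
    exact List.relationReflTransGen_of_exists_isChain_cons t
      (hchain.imp_of_mem_imp fun x y hx hy hxy => ⟨hmem x hx, hmem y hy, hxy⟩) hlast
  · rintro ⟨ha, h⟩
    induction h using Relation.ReflTransGen.head_induction_on with
    | refl => exact ⟨[b], rfl, rfl, List.forall_mem_singleton.2 ha, .singleton b⟩
    | head hstep _ ih =>
      obtain ⟨l, hhead, hlast, hmem, hchain⟩ := ih hstep.2.1
      obtain ⟨t, rfl⟩ := List.head?_eq_some_iff.1 hhead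
      exact ⟨_ :: _ :: t, rfl, by rwa [List.getLast?_cons_cons], List.forall_mem_cons.2 ⟨ha, hmem⟩,
        List.isChain_cons_cons.2 ⟨hstep.2.2, hchain⟩⟩

lemma isNChain_of_hub {Z : Set (Fin k → ℕ)} (ha : a ∈ Z) (hb : b ∈ Z) (hz : z ∈ Z)
    (haz : fdist a z ≤ N) (hbz : fdist b z ≤ N) : IsNChain Z N a b :=
  isNChain_iff_reflTransGen.2 ⟨ha, .tail (.single ⟨ha, hz, haz⟩) ⟨hz, hb, fdist_comm b z ▸ hbz⟩⟩

lemma catDeg_le_of_hub (hz : z ∈ Zset g n) (hub : ∀ y ∈ Zset g n, fdist y z ≤ N) :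
    catDeg g n ≤ N :=
  Nat.sInf_le fun a ha b hb => isNChain_of_hub ha hb hz (hub a ha) (hub b hb)

/- Finiteness guarantees that some `N` connects all factorizations, so that the infimum defining
`catDeg` is attained. -/
lemma isNChain_catDeg (hfin : (Zset g n).Finite) (ha : a ∈ Zset g n) (hb : b ∈ Zset g n) :
    IsNChain (Zset g n) (catDeg g n) a b := by
  obtain ⟨B, hB⟩ := (hfin.image (fdist · b)).bddAbove
  have hub : ∀ y ∈ Zset g n, fdist y b ≤ B := fun y hy => hB (Set.mem_image_of_mem _ hy)
  exact Nat.sInf_mem (s := {N | ∀ a ∈ Zset g n, ∀ b ∈ Zset g n, IsNChain (Zset g n) N a b})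
    ⟨B, fun x hx y hy => isNChain_of_hub hx hy hb (hub x hx) (hub y hy)⟩ a ha b hb

lemma le_catDeg_of_isolated (hfin : (Zset g n).Finite) (ha : a ∈ Zset g n) (hb : b ∈ Zset g n)
    (hba : b ≠ a) (hiso : ∀ y ∈ Zset g n, y ≠ a → N ≤ fdist a y) : N ≤ catDeg g n := by
  have hchain := (isNChain_iff_reflTransGen.1 (isNChain_catDeg hfin ha hb)).2
  obtain ⟨y, hya, -, hy, hay⟩ := exists_rel_ne_of_reflTransGen_ne hchain hba
  exact (hiso y hy hya).trans hay

lemma catDeg_of_Zset_eq_pair (h : Zset g n = {a, b}) : catDeg g n = fdist a b := by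
  refine le_antisymm (catDeg_le_of_hub (z := b) (by simp [h]) (by simp [h, fdist_self])) ?_
  rcases eq_or_ne b a with rfl | hba
  · simp [fdist_self]
  · exact le_catDeg_of_isolated (by simp [h]) (by simp [h]) (by simp [h]) hba (by simp [h])

end Catenary

section Betti

variable {k : ℕ} {g : Fin k → ℕ} {n m c : ℕ} {i : Fin k} {a b x y u r : Fin k → ℕ}

/-- The edge relation of the graph on the factorizations of `n` whose connectedness `IsBetti`
tests: two factorizations are adjacent if they share a generator. It is phrased so as to agree
definitionally with the relation inside `IsBetti`. -/
def SharesGenerator (g : Fin k → ℕ) (n : ℕ) (x y : Fin k → ℕ) : Prop :=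
  x ∈ Zset g n ∧ y ∈ Zset g n ∧ ∃ i, min (x i) (y i) ≠ 0

lemma sharesGenerator_of_ne_zero (hx : x ∈ Zset g n) (hy : y ∈ Zset g n) (hxi : x i ≠ 0)
    (hyi : y i ≠ 0) : SharesGenerator g n x y :=
  ⟨hx, hy, i, by simp [hxi, hyi]⟩

instance : Std.Symm (SharesGenerator g n) where
  symm _ _ h := ⟨h.2.1, h.1, h.2.2.imp fun i hi => by rwa [min_comm]⟩

lemma isBetti_iff_not_reflTransGen_sharesGenerator :
    IsBetti g n ↔ ∃ x ∈ Zset g n, ∃ y ∈ Zset g n,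
      ¬ Relation.ReflTransGen (SharesGenerator g n) x y :=
  Iff.rfl

lemma isBetti_of_isolated (ha : a ∈ Zset g n) (hb : b ∈ Zset g n) (hba : b ≠ a)
    (hiso : ∀ y, SharesGenerator g n a y → y = a) : IsBetti g n := by
  refine ⟨a, ha, b, hb, fun h => ?_⟩
  obtain ⟨y, hya, hay⟩ := exists_rel_ne_of_reflTransGen_ne h hba
  exact hya (hiso y hay)

/-- `c` is the critical multiplicity of the `i`-th generator: the least positive `m` such that
`m * g i` lies in the monoid generated by the other generators (Herzog's `cᵢ`). -/
def IsCritical (g : Fin k → ℕ) (i : Fin k) (c : ℕ) : Prop :=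
  IsLeast {m | 0 < m ∧ ∃ x ∈ Zset g (m * g i), x i = 0} c

lemma IsCritical.pos (hc : IsCritical g i c) : 0 < c :=
  hc.1.1

lemma IsCritical.le (hc : IsCritical g i c) (hm : 0 < m) (hx : x ∈ Zset g (m * g i))
    (hxi : x i = 0) : c ≤ m :=
  hc.2 ⟨hm, x, hx, hxi⟩

lemma IsCritical.eq_single (hc : IsCritical g i c) (hg : ∀ j, 0 < g j)
    (hx : x ∈ Zset g (c * g i)) (hxi : x i ≠ 0) : x = Pi.single i c := by
  have hxc : x i ≤ c := Nat.le_of_mul_le_mul_right (mul_le_of_mem_Zset hx i) (hg i)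
  obtain ⟨d, rfl⟩ := Nat.exists_eq_add_of_le' hxc
  have hsplit : Function.update x i 0 + Pi.single i (x i) = x := by
    ext j
    rcases eq_or_ne j i with rfl | hj
    · simp
    · simp [hj]
  have hrest : Function.update x i 0 ∈ Zset g (d * g i) := by
    rwa [← add_mem_Zset_iff (single_mem_Zset_iff.2 rfl : Pi.single i (x i) ∈ _), hsplit,
      ← add_mul]
  obtain rfl : d = 0 := by
    by_contra hd
    have := hc.le (Nat.pos_of_ne_zero hd) hrest (by simp)
    omega
  have hzero : Function.update x i 0 = 0 := eq_zero_of_mem_Zset_zero hg (by simpa using hrest)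
  rw [← hsplit, hzero]
  simp

theorem IsCritical.isBetti (hc : IsCritical g i c) (hg : ∀ j, 0 < g j) : IsBetti g (c * g i) := by
  obtain ⟨r, hr, hri⟩ := hc.1.2
  refine isBetti_of_isolated (single_mem_Zset_iff.2 rfl) hr ?_ ?_
  · rintro rfl
    exact hc.pos.ne' (by simpa using hri)
  · rintro y ⟨-, hy, j, hj⟩
    obtain rfl : j = i := by
      by_contra hne
      simp [hne] at hj
    exact hc.eq_single hg hy fun hyi => hj (by simp [hyi])

/- Trading `c` copies of `g i` for `r` turns `u + Pi.single i c` into `u + r`, which involves every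
generator other than `g i` and still shares `u` with the original. -/
lemma reflTransGen_sharesGenerator_of_exchange (hc : c ≠ 0) (hr : r ∈ Zset g (c * g i))
    (hfull : ∀ j ≠ i, r j ≠ 0) (hx : u + Pi.single i c ∈ Zset g n) (hu : u ≠ 0)
    (hy : y ∈ Zset g n) (hy0 : y ≠ 0) :
    Relation.ReflTransGen (SharesGenerator g n) (u + Pi.single i c) y := by
  obtain ⟨j, hj⟩ := Function.ne_iff.1 hy0
  rcases eq_or_ne j i with rfl | hji
  · exact .single (sharesGenerator_of_ne_zero (i := j) hx hy (by simp [hc]) hj)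
  · obtain ⟨l, hl⟩ := Function.ne_iff.1 hu
    have hz : u + r ∈ Zset g n := add_mem_Zset_of_exchange hx (single_mem_Zset_iff.2 rfl) hr
    refine .tail (.single (sharesGenerator_of_ne_zero (i := l) hx hz ?_ ?_))
      (sharesGenerator_of_ne_zero (i := j) hz hy ?_ hj)
    · simpa using fun h => absurd h hl
    · simpa using fun h => absurd h hl
    · simpa using fun _ => hfull j hji

lemma IsCritical.eq_mul_of_not_reflTransGen (hc : IsCritical g i c) (hr : r ∈ Zset g (c * g i))
    (hfull : ∀ j ≠ i, r j ≠ 0) (hm : m ≠ 0) (hx : Pi.single i m ∈ Zset g n)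
    (hy : y ∈ Zset g n) (hy0 : y ≠ 0)
    (hxy : ¬ Relation.ReflTransGen (SharesGenerator g n) (Pi.single i m) y) : n = c * g i := by
  obtain rfl := single_mem_Zset_iff.1 hx
  have hyi : y i = 0 := by
    by_contra hyi
    exact hxy (.single (sharesGenerator_of_ne_zero (i := i) hx hy (by simpa using hm) hyi))
  obtain ⟨d, rfl⟩ := Nat.exists_eq_add_of_le' (hc.le (Nat.pos_of_ne_zero hm) hy hyi)
  obtain rfl : d = 0 := by
    by_contra hd
    rw [Pi.single_add] at hx hxy
    exact hxy (reflTransGen_sharesGenerator_of_exchange hc.pos.ne' hr hfull hx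
      (by simpa using hd) hy hy0)
  rw [zero_add]

end Betti

section ThreeGenerators

variable {g c : Fin 3 → ℕ} {n : ℕ}

lemma exists_eq_single_of_forall_eq_zero_or {x y : Fin 3 → ℕ} (h : ∀ i, x i = 0 ∨ y i = 0) :
    ∃ i, x = Pi.single i (x i) ∨ y = Pi.single i (y i) := by
  have pigeonhole : ∀ s : Fin 3 → Bool, ∃ i, (∀ j ≠ i, s j = true) ∨ ∀ j ≠ i, s j = false := by
    decide
  obtain ⟨i, hx | hy⟩ := pigeonhole fun j => decide (x j = 0)
  · exact ⟨i, .inl (eq_single_of_forall_ne fun j hj => of_decide_eq_true (hx j hj))⟩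
  · exact ⟨i, .inr (eq_single_of_forall_ne fun j hj =>
      (h j).resolve_left (of_decide_eq_false (hy j hj)))⟩

theorem exists_eq_mul_of_isBetti (hg : ∀ i, 0 < g i) (hc : ∀ i, IsCritical g i (c i))
    (hfull : ∀ i, ∃ r ∈ Zset g (c i * g i), ∀ j ≠ i, r j ≠ 0) (hn : IsBetti g n) :
    ∃ i, n = c i * g i := by
  obtain ⟨x, hx, y, hy, hxy⟩ := isBetti_iff_not_reflTransGen_sharesGenerator.1 hn
  have hyx : ¬ Relation.ReflTransGen (SharesGenerator g n) y x := fun h => hxy (symm h)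
  have hdisj : ∀ i, x i = 0 ∨ y i = 0 := by
    by_contra! ⟨i, hxi, hyi⟩
    exact hxy (.single (sharesGenerator_of_ne_zero hx hy hxi hyi))
  have hn0 : n ≠ 0 := by
    rintro rfl
    rw [eq_zero_of_mem_Zset_zero hg hx, eq_zero_of_mem_Zset_zero hg hy] at hxy
    exact hxy .refl
  have hx0 : x ≠ 0 := by
    rintro rfl
    exact hn0 (zero_mem_Zset_iff.1 hx)
  have hy0 : y ≠ 0 := by
    rintro rfl
    exact hn0 (zero_mem_Zset_iff.1 hy)
  obtain ⟨i, hxy_single⟩ := exists_eq_single_of_forall_eq_zero_or hdisj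
  obtain ⟨r, hr, hrj⟩ := hfull i
  rcases hxy_single with hxi | hyi
  · rw [hxi] at hx hxy hx0
    exact ⟨i, (hc i).eq_mul_of_not_reflTransGen hr hrj (by simpa using hx0) hx hy hy0 hxy⟩
  · rw [hyi] at hy hyx hy0
    exact ⟨i, (hc i).eq_mul_of_not_reflTransGen hr hrj (by simpa using hy0) hy hx hx0 hyx⟩

theorem isBetti_iff_exists_eq_mul (hg : ∀ i, 0 < g i) (hc : ∀ i, IsCritical g i (c i))
    (hfull : ∀ i, ∃ r ∈ Zset g (c i * g i), ∀ j ≠ i, r j ≠ 0) :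
    IsBetti g n ↔ ∃ i, n = c i * g i := by
  refine ⟨exists_eq_mul_of_isBetti hg hc hfull, ?_⟩
  rintro ⟨i, rfl⟩
  exact (hc i).isBetti hg

end ThreeGenerators

lemma Zset_58 : Zset ![11, 25, 29] 58 = {![3, 1, 0], ![0, 0, 2]} := by
  rw [Zset_eq_filter_piFinset (by decide), ← Finset.coe_pair, Finset.coe_inj]
  decide +kernel

lemma Zset_150 : Zset ![11, 25, 29] 150 = {![0, 6, 0], ![11, 0, 1]} := by
  rw [Zset_eq_filter_piFinset (by decide), ← Finset.coe_pair, Finset.coe_inj]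
  decide +kernel

lemma Zset_154 : Zset ![11, 25, 29] 154 = {![14, 0, 0], ![0, 5, 1]} := by
  rw [Zset_eq_filter_piFinset (by decide), ← Finset.coe_pair, Finset.coe_inj]
  decide +kernel

lemma Zset_175 : Zset ![11, 25, 29] 175 = {![0, 7, 0], ![8, 0, 3], ![11, 1, 1]} := by
  rw [Zset_eq_filter_piFinset (by decide), ← Finset.coe_pair, ← Finset.coe_insert, Finset.coe_inj]
  decide +kernel

/-- Row `i` is a factorization, without the `i`-th generator, of the least positive multiple of
that generator admitting one. The rows encode `14 * 11 = 5 * 25 + 29`, `6 * 25 = 11 * 11 + 29` and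
`2 * 29 = 3 * 11 + 25`. -/
def criticalRelation : Fin 3 → Fin 3 → ℕ :=
  ![![0, 5, 1], ![11, 0, 1], ![3, 1, 0]]

lemma criticalRelation_mem_Zset (i : Fin 3) :
    criticalRelation i ∈ Zset ![11, 25, 29] (![14, 6, 2] i * ![11, 25, 29] i) := by
  fin_cases i <;> rfl

lemma isCritical_11_25_29 (i : Fin 3) : IsCritical ![11, 25, 29] i (![14, 6, 2] i) := by
  refine ⟨⟨by decide +revert, criticalRelation i, criticalRelation_mem_Zset i, ?_⟩, ?_⟩
  · fin_cases i <;> rfl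
  · rintro m ⟨hm, x, hx, hxi⟩
    replace hx : ∑ j, x j * ![11, 25, 29] j = m * ![11, 25, 29] i := hx
    by_contra! hlt
    fin_cases i <;>
      simp only [Fin.sum_univ_three, Matrix.cons_val, Fin.reduceFinMk] at hlt hx hxi <;>
      interval_cases m <;> omega

lemma isBetti_11_25_29_iff {n : ℕ} :
    IsBetti ![11, 25, 29] n ↔ n = 58 ∨ n = 150 ∨ n = 154 := by
  rw [isBetti_iff_exists_eq_mul (by decide) isCritical_11_25_29
    fun i => ⟨_, criticalRelation_mem_Zset i, by decide +revert⟩]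
  simp only [Fin.exists_fin_succ, Matrix.cons_val_zero, Matrix.cons_val_succ, IsEmpty.exists_iff,
    or_false, Nat.reduceMul]
  tauto

lemma catDeg_58 : catDeg ![11, 25, 29] 58 = 4 :=
  (catDeg_of_Zset_eq_pair Zset_58).trans (by decide)

lemma catDeg_150 : catDeg ![11, 25, 29] 150 = 12 :=
  (catDeg_of_Zset_eq_pair Zset_150).trans (by decide)

lemma catDeg_154 : catDeg ![11, 25, 29] 154 = 14 :=
  (catDeg_of_Zset_eq_pair Zset_154).trans (by decide)

lemma catDeg_175 : catDeg ![11, 25, 29] 175 = 11 := by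
  apply le_antisymm
  · have hub : ∀ y ∈ Zset ![11, 25, 29] 175, fdist y ![8, 0, 3] ≤ 11 := by
      rw [Zset_175]
      rintro y (rfl | rfl | rfl) <;> decide
    exact catDeg_le_of_hub (by simp [Zset_175]) hub
  · have hsep : ∀ y ∈ Zset ![11, 25, 29] 175, y ≠ ![0, 7, 0] → 11 ≤ fdist ![0, 7, 0] y := by
      rw [Zset_175]
      rintro y (rfl | rfl | rfl) <;> decide
    exact le_catDeg_of_isolated (b := ![8, 0, 3]) (by simp [Zset_175]) (by simp [Zset_175])
      (by simp [Zset_175]) (by decide) hsep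

/-- In S = ⟨11,25,29⟩: the Betti elements are exactly 58, 150, 154, with
catenary degrees 4, 12, 14; moreover c(175) = 11, so some element of S has a
catenary degree differing from that of every Betti element. -/
theorem betti_and_catdeg_11_25_29 :
    {n | IsBetti ![11, 25, 29] n} = {58, 150, 154} ∧
    catDeg ![11, 25, 29] 58 = 4 ∧
    catDeg ![11, 25, 29] 150 = 12 ∧
    catDeg ![11, 25, 29] 154 = 14 ∧
    catDeg ![11, 25, 29] 175 = 11 ∧
    ∃ n, (Zset ![11, 25, 29] n).Nonempty ∧
      ∀ m, IsBetti ![11, 25, 29] m → catDeg ![11, 25, 29] n ≠ catDeg ![11, 25, 29] m := by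
  refine ⟨Set.ext fun n => isBetti_11_25_29_iff, catDeg_58, catDeg_150, catDeg_154, catDeg_175,
    175, ⟨![0, 7, 0], by simp [Zset_175]⟩, fun m hm => ?_⟩
  rcases isBetti_11_25_29_iff.1 hm with rfl | rfl | rfl
  · simp [catDeg_175, catDeg_58]
  · simp [catDeg_175, catDeg_150]
  · simp [catDeg_175, catDeg_154]
end

section
/- Let G be a cyclic group of order n ≥ 4 and S = B(G) the block monoid of zero-sum sequences over G. Then the set of catenary degrees of S is C(S) = {0, 2, 3, ..., n}. -/
open scoped Classical

/-- A sequence over `G` (a multiset of elements of `G`) is a minimal zero-sum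
sequence if it is nonempty, has sum zero, and no proper nonempty subsequence
has sum zero. These are the irreducibles of the block monoid `B(G)`. -/
def IsMinZeroSum {G : Type*} [AddCommGroup G] (s : Multiset G) : Prop :=
  s ≠ 0 ∧ s.sum = 0 ∧ ∀ t ≤ s, t.sum = 0 → t = 0 ∨ t = s

/-- The set of factorizations of a zero-sum sequence `A` into minimal zero-sum
sequences: multisets of irreducibles of `B(G)` whose product (sum) is `A`. -/
def BFact {G : Type*} [AddCommGroup G] (A : Multiset G) :
    Set (Multiset (Multiset G)) :=
  {F | (∀ s ∈ F, IsMinZeroSum s) ∧ F.sum = A}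

/-- The distance between two factorizations: the maximum of the lengths of the
parts remaining after cancelling the common irreducibles. -/
noncomputable def bdist {G : Type*} [AddCommGroup G] (F F' : Multiset (Multiset G)) : ℕ :=
  max (F - F').card (F' - F).card

/-- There is an `N`-chain of factorizations within `Z` from `a` to `b`. -/
def BIsNChain {G : Type*} [AddCommGroup G] (Z : Set (Multiset (Multiset G)))
    (N : ℕ) (a b : Multiset (Multiset G)) : Prop :=
  ∃ l : List (Multiset (Multiset G)), l.head? = some a ∧ l.getLast? = some b ∧
    (∀ x ∈ l, x ∈ Z) ∧ l.Chain' (fun x y => bdist x y ≤ N)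

/-- The catenary degree of a zero-sum sequence `A` in the block monoid: the
least `N` such that any two factorizations of `A` are joined by an `N`-chain. -/
noncomputable def bCatDeg {G : Type*} [AddCommGroup G] (A : Multiset G) : ℕ :=
  sInf {N | ∀ F ∈ BFact A, ∀ F' ∈ BFact A, BIsNChain (BFact A) N F F'}

/-!
Prefix sums and the pigeonhole principle show that a minimal zero-sum sequence over `G` has at most
`N = |G|` terms, and this bounds every catenary degree by `N`. Indeed, let `F` and `F'` factor `A`
and suppose `F'` has more than `N` members. Any `s ∈ F` has at most `N` terms, so it divides the
product of a proper part `W` of `F' = W + V`; write `W.sum = s + r` and factor `r` as `w`. By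
induction on `A`, the factorizations `F` and `s + w + V` are joined after cancelling `s`, while
`s + w + V` and `F'` are joined after cancelling `V`. The value `1` never occurs, because
factorizations that differ in a single atom are equal.

Conversely, let `g` have order `n`. The sequence `(dk g) (-d g)ᵏ gⁿ` has only two factorizations:
the atom containing `dk g` uses either all the copies of `-d g` or none of them. Their lengths are
`2` and `k + 1`, they share no atom, and so the catenary degree is `k + 1`. With `d = 2`, `k = 1`
this gives `2` (where `4 ≤ n` is needed), and with `d = 1`, `2 ≤ k < n` it gives `3, …, n`.
-/

section Multiset

variable {α β : Type*}

theorem exists_le_map_eq_of_le_map {f : α → β} {s : Multiset α} {t : Multiset β}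
    (h : t ≤ s.map f) : ∃ u ≤ s, u.map f = t := by
  have ht : t ∈ Multiset.powersetCard t.card (s.map f) := Multiset.mem_powersetCard.2 ⟨h, rfl⟩
  rw [Multiset.powersetCard_map, Multiset.mem_map] at ht
  obtain ⟨u, hu, rfl⟩ := ht
  exact ⟨u, (Multiset.mem_powersetCard.1 hu).1, rfl⟩

theorem exists_eq_add_of_le_replicate_add_replicate {a b : α} {m k : ℕ} {t : Multiset α}
    (h : t ≤ Multiset.replicate m a + Multiset.replicate k b) :
    ∃ x ≤ m, ∃ y ≤ k, t = Multiset.replicate x a + Multiset.replicate y b := by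
  obtain ⟨x, hx, hx'⟩ := Multiset.le_replicate_iff.1
    (Multiset.inter_le_right (s := t) (t := Multiset.replicate m a))
  obtain ⟨y, hy, hy'⟩ := Multiset.le_replicate_iff.1 (tsub_le_iff_left.2 h)
  exact ⟨x, hx, y, hy, by rw [← hx', ← hy', add_comm, Multiset.sub_add_inter]⟩

theorem exists_le_card_le_of_le_sum {F : Multiset (Multiset α)} {u : Multiset α}
    (h : u ≤ F.sum) : ∃ W ≤ F, W.card ≤ u.card ∧ u ≤ W.sum := by
  induction F using Multiset.induction_on generalizing u with
  | empty => exact ⟨0, le_rfl, by simp, by simpa using h⟩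
  | cons s F ih =>
    rw [Multiset.sum_cons] at h
    obtain ⟨W, hWF, hWc, hW⟩ := ih (tsub_le_iff_left.2 h)
    rcases (Multiset.sub_le_self u s).eq_or_lt with hu | hu
    · rw [hu] at hWc hW
      exact ⟨W, hWF.trans (Multiset.le_cons_self _ _), hWc, hW⟩
    · refine ⟨s ::ₘ W, Multiset.cons_le_cons _ hWF, ?_, ?_⟩
      · rw [Multiset.card_cons]
        exact hWc.trans_lt (Multiset.card_lt_card hu)
      · rw [Multiset.sum_cons]
        exact tsub_le_iff_left.1 hW

theorem nsmul_cons_replicate (k d : ℕ) (a b : α) :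
    k • (a ::ₘ Multiset.replicate d b) =
      Multiset.replicate k a + Multiset.replicate (d * k) b := by
  rw [← Multiset.singleton_add, nsmul_add, Multiset.nsmul_singleton, Multiset.nsmul_replicate,
    mul_comm]

end Multiset

section BlockMonoid

variable {G : Type*} [AddCommGroup G]

section MinZeroSum

theorem exists_le_sum_eq_zero_of_card_le [Fintype G] {s : Multiset G}
    (hs : Fintype.card G ≤ s.card) :
    ∃ t ≤ s, t ≠ 0 ∧ t.card ≤ Fintype.card G ∧ t.sum = 0 := by
  induction s using Quotient.inductionOn with | _ l =>
  rw [Multiset.quot_mk_to_coe, Multiset.coe_card] at hs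
  obtain ⟨i, j, hne, heq⟩ := Fintype.exists_ne_map_eq_of_card_lt
    (fun i : Fin (Fintype.card G + 1) => (l.take i).sum) (by simp)
  wlog hij : i < j generalizing i j
  · exact this j i hne.symm heq.symm (by omega)
  have hlen : ((l.drop i).take (j - i)).length = j - i := by
    rw [List.length_take, List.length_drop]
    omega
  have hsplit : l.take j = l.take i ++ (l.drop i).take (j - i) := by
    rw [← List.take_add, Nat.add_sub_cancel' (Fin.le_def.1 hij.le)]
  refine ⟨(l.drop i).take (j - i),
    ((List.take_sublist _ _).trans (List.drop_sublist _ _)).subperm, ?_, ?_, ?_⟩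
  · rw [← Multiset.card_pos, Multiset.coe_card, hlen]
    omega
  · rw [Multiset.coe_card, hlen]
    omega
  · simpa [hsplit] using heq

theorem IsMinZeroSum.eq_of_le {s t : Multiset G} (hs : IsMinZeroSum s) (hts : t ≤ s)
    (ht : t ≠ 0) (hsum : t.sum = 0) : t = s :=
  (hs.2.2 t hts hsum).resolve_left ht

theorem IsMinZeroSum.card_le [Fintype G] {s : Multiset G} (hs : IsMinZeroSum s) :
    s.card ≤ Fintype.card G := by
  by_contra! hlt
  obtain ⟨t, hts, ht, htc, hsum⟩ := exists_le_sum_eq_zero_of_card_le hlt.le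
  rw [hs.eq_of_le hts ht hsum] at htc
  omega

theorem isMinZeroSum_map_nsmul (g : G) {M : Multiset ℕ} (hM : M ≠ 0) (hpos : ∀ i ∈ M, 0 < i)
    (hsum : M.sum = addOrderOf g) : IsMinZeroSum (M.map (· • g)) := by
  refine ⟨by simpa using hM, by rw [← Multiset.sum_smul, hsum, addOrderOf_nsmul_eq_zero],
    fun t ht ht0 => ?_⟩
  obtain ⟨N, hN, rfl⟩ := exists_le_map_eq_of_le_map ht
  obtain ⟨N', rfl⟩ := Multiset.le_iff_exists_add.1 hN
  rw [← Multiset.sum_smul, ← addOrderOf_dvd_iff_nsmul_eq_zero, ← hsum, Multiset.sum_add] at ht0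
  have eq_zero_of_sum {K : Multiset ℕ} (hK : K ≤ N + N') (h0 : K.sum = 0) : K = 0 :=
    Multiset.eq_zero_of_forall_notMem fun i hi =>
      (hpos i (Multiset.mem_of_le hK hi)).ne' (Multiset.sum_eq_zero_iff.1 h0 i hi)
  rcases Nat.eq_zero_or_pos N.sum with h | h
  · exact .inl (by rw [eq_zero_of_sum hN h, Multiset.map_zero])
  · have := Nat.le_of_dvd h ht0
    exact .inr (by rw [eq_zero_of_sum (Multiset.le_add_left N' N) (by omega), add_zero])

theorem isMinZeroSum_nsmul_cons_replicate_nsmul {g : G} {a d k : ℕ} (ha : 0 < a) (hd : 0 < d)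
    (h : a + d * k = addOrderOf g) :
    IsMinZeroSum (a • g ::ₘ Multiset.replicate k (d • g)) := by
  have hpos : ∀ i ∈ a ::ₘ Multiset.replicate k d, 0 < i := by
    simp only [Multiset.mem_cons, Multiset.mem_replicate]
    rintro i (rfl | ⟨-, rfl⟩) <;> assumption
  simpa using isMinZeroSum_map_nsmul g Multiset.cons_ne_zero hpos
    (by rw [Multiset.sum_cons, Multiset.sum_replicate, smul_eq_mul, mul_comm, h])

theorem isMinZeroSum_replicate_addOrderOf {g : G} (hg : 0 < addOrderOf g) :
    IsMinZeroSum (Multiset.replicate (addOrderOf g) g) := by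
  have := isMinZeroSum_nsmul_cons_replicate_nsmul (g := g) (a := 1) (k := addOrderOf g - 1)
    one_pos one_pos (by omega)
  rwa [one_nsmul, ← Multiset.replicate_succ, Nat.sub_add_cancel hg] at this

end MinZeroSum

section Factorization

variable {A B s : Multiset G} {F F' : Multiset (Multiset G)}

theorem cons_mem_bFact_add :
    s ::ₘ F ∈ BFact (s + A) ↔ IsMinZeroSum s ∧ F ∈ BFact A := by
  simp [BFact, and_assoc]

theorem add_mem_bFact (hF : F ∈ BFact A) (hF' : F' ∈ BFact B) : F + F' ∈ BFact (A + B) :=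
  ⟨fun s hs => (Multiset.mem_add.1 hs).elim (hF.1 s) (hF'.1 s), by
    rw [Multiset.sum_add, hF.2, hF'.2]⟩

theorem mem_bFact_sum_of_le {W : Multiset (Multiset G)} (hF : F ∈ BFact A) (hW : W ≤ F) :
    W ∈ BFact W.sum :=
  ⟨fun s hs => hF.1 s (Multiset.mem_of_le hW hs), rfl⟩

theorem le_of_mem_bFact (hF : F ∈ BFact A) (hs : s ∈ F) : s ≤ A :=
  hF.2 ▸ Multiset.le_sum_of_mem hs

theorem sum_eq_zero_of_mem_bFact (hF : F ∈ BFact A) : A.sum = 0 := by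
  rw [← hF.2, ← Multiset.coe_sumAddMonoidHom, map_multiset_sum]
  refine Multiset.sum_eq_zero fun x hx => ?_
  obtain ⟨s, hs, rfl⟩ := Multiset.mem_map.1 hx
  exact (hF.1 s hs).2.1

theorem bFact_zero : BFact (0 : Multiset G) = {0} := by
  refine Set.eq_singleton_iff_unique_mem.2 ⟨by simp [BFact], fun F hF => ?_⟩
  exact Multiset.eq_zero_of_forall_notMem fun s hs =>
    (hF.1 s hs).1 (Multiset.sum_eq_zero_iff.1 hF.2 s hs)

theorem card_pos_iff_of_mem_bFact (hF : F ∈ BFact A) : 0 < F.card ↔ 0 < A := by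
  rw [Multiset.card_pos, pos_iff_ne_zero, not_iff_not]
  constructor
  · rintro rfl
    exact hF.2.symm
  · rintro rfl
    rwa [bFact_zero] at hF

theorem bFact_nsmul (hs : IsMinZeroSum s) {k : ℕ}
    (h : ∀ t ≤ k • s, IsMinZeroSum t → t = s) : BFact (k • s) = {Multiset.replicate k s} := by
  refine Set.eq_singleton_iff_unique_mem.2 ⟨⟨fun t ht => ?_, Multiset.sum_replicate k s⟩,
    fun F hF => ?_⟩
  · rwa [Multiset.eq_of_mem_replicate ht]
  have hrep : F = Multiset.replicate F.card s :=
    Multiset.eq_replicate_card.2 fun t ht => h t (le_of_mem_bFact hF ht) (hF.1 t ht)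
  have hcard := congrArg Multiset.card hF.2
  rw [hrep, Multiset.sum_replicate, Multiset.card_nsmul, Multiset.card_nsmul] at hcard
  rw [hrep, Nat.eq_of_mul_eq_mul_right (Multiset.card_pos.2 hs.1) hcard]

theorem IsMinZeroSum.bFact_eq (hs : IsMinZeroSum s) : BFact s = {{s}} := by
  simpa using bFact_nsmul (k := 1) hs fun t ht htm =>
    hs.eq_of_le (by simpa using ht) htm.1 htm.2.1

theorem bFact_nonempty (hA : A.sum = 0) : (BFact A).Nonempty := by
  induction A using Multiset.strongInductionOn with | _ A ih =>
  by_cases h0 : A = 0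
  · exact ⟨0, by simp [BFact, h0]⟩
  by_cases hmin : IsMinZeroSum A
  · exact ⟨{A}, by simp [hmin.bFact_eq]⟩
  obtain ⟨t, ht, hts, ht0, htA⟩ : ∃ t ≤ A, t.sum = 0 ∧ t ≠ 0 ∧ t ≠ A := by
    by_contra! h
    exact hmin ⟨h0, hA, fun t ht hts => or_iff_not_imp_left.2 (h t ht hts)⟩
  obtain ⟨r, rfl⟩ := Multiset.le_iff_exists_add.1 ht
  have hr : r ≠ 0 := by simpa using htA
  obtain ⟨F, hF⟩ := ih t (lt_add_of_pos_right _ (pos_iff_ne_zero.2 hr)) hts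
  obtain ⟨F', hF'⟩ := ih r (lt_add_of_pos_left _ (pos_iff_ne_zero.2 ht0)) (by simpa [hts] using hA)
  exact ⟨F + F', add_mem_bFact hF hF'⟩

theorem exists_eq_cons_cons_of_mem_bFact {a : G} (hF : F ∈ BFact (a ::ₘ A)) :
    ∃ t ≤ A, ∃ F₀, F = (a ::ₘ t) ::ₘ F₀ := by
  obtain ⟨s, hs, has⟩ := Multiset.mem_join.1
    (show a ∈ F.sum by rw [hF.2]; exact Multiset.mem_cons_self _ _)
  obtain ⟨t, rfl⟩ := Multiset.exists_cons_of_mem has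
  exact ⟨t, (Multiset.cons_le_cons_iff a).1 (le_of_mem_bFact hF hs), Multiset.exists_cons_of_mem hs⟩

theorem exists_le_exists_cons_mem_bFact (hF : F ∈ BFact A) (hs : IsMinZeroSum s) (hsA : s ≤ A) :
    ∃ W ≤ F, W.card ≤ s.card ∧ ∃ w, s ::ₘ w ∈ BFact W.sum := by
  rw [← hF.2] at hsA
  obtain ⟨W, hWF, hWc, hsW⟩ := exists_le_card_le_of_le_sum hsA
  obtain ⟨r, hr⟩ := Multiset.le_iff_exists_add.1 hsW
  have hW := sum_eq_zero_of_mem_bFact (mem_bFact_sum_of_le hF hWF)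
  obtain ⟨w, hw⟩ := bFact_nonempty (A := r) (by simpa [hr, hs.2.1] using hW)
  exact ⟨W, hWF, hWc, w, hr ▸ cons_mem_bFact_add.2 ⟨hs, hw⟩⟩

end Factorization

section Distance

variable {A : Multiset G} {F F' : Multiset (Multiset G)}

theorem bdist_self (F : Multiset (Multiset G)) : bdist F F = 0 := by simp [bdist]

theorem bdist_comm (F F' : Multiset (Multiset G)) : bdist F F' = bdist F' F := max_comm _ _

theorem bdist_add_left (C F F' : Multiset (Multiset G)) :
    bdist (C + F) (C + F') = bdist F F' := by
  simp [bdist, add_tsub_add_eq_tsub_left]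

theorem bdist_le_max_card (F F' : Multiset (Multiset G)) :
    bdist F F' ≤ max F.card F'.card :=
  max_le_max (Multiset.card_le_card (Multiset.sub_le_self _ _))
    (Multiset.card_le_card (Multiset.sub_le_self _ _))

theorem eq_of_card_sub_le_one (hF : F ∈ BFact A) (hF' : F' ∈ BFact A)
    (h : (F - F').card ≤ 1) : F = F' := by
  have hFadd := Multiset.sub_add_inter F F'
  have hFadd' := Multiset.sub_add_inter F' F
  rw [Multiset.inter_comm] at hFadd'
  have hX := mem_bFact_sum_of_le hF (Multiset.sub_le_self F F')
  have hY : F' - F ∈ BFact (F - F').sum := by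
    have hsum : (F' - F).sum = (F - F').sum := add_right_cancel (b := (F ∩ F').sum) <| by
      rw [← Multiset.sum_add, ← Multiset.sum_add, hFadd, hFadd', hF.2, hF'.2]
    exact hsum ▸ mem_bFact_sum_of_le hF' (Multiset.sub_le_self F' F)
  suffices F' - F = F - F' by rw [← hFadd, ← this, hFadd']
  rcases Nat.le_one_iff_eq_zero_or_eq_one.1 h with h0 | h1
  · rw [Multiset.card_eq_zero] at h0
    rw [h0, Multiset.sum_zero, bFact_zero] at hY
    rw [h0, hY]
  · obtain ⟨s, hs⟩ := Multiset.card_eq_one.1 h1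
    rw [hs] at hX hY ⊢
    rw [Multiset.sum_singleton, (hX.1 s (Multiset.mem_singleton_self s)).bFact_eq] at hY
    exact hY

theorem pairwise_one_lt_bdist (A : Multiset G) :
    (BFact A).Pairwise fun F F' => 1 < bdist F F' := fun F hF F' hF' hne => by
  by_contra! h
  exact hne (eq_of_card_sub_le_one hF hF' ((le_max_left _ _).trans h))

theorem bdist_eq_card_of_card_eq_two (hF : F ∈ BFact A) (hF' : F' ∈ BFact A) (hne : F ≠ F')
    (h2 : F.card = 2) : bdist F F' = F'.card := by
  have hsub : 2 ≤ (F - F').card := by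
    by_contra! h
    exact hne (eq_of_card_sub_le_one hF hF' (by omega))
  have hsub' : 2 ≤ (F' - F).card := by
    by_contra! h
    exact hne (eq_of_card_sub_le_one hF' hF (by omega)).symm
  have hcard (K L : Multiset (Multiset G)) : (K - L).card + (K ∩ L).card = K.card := by
    rw [← Multiset.card_add, Multiset.sub_add_inter]
  have hF_card := hcard F F'
  have hF'_card := hcard F' F
  rw [Multiset.inter_comm] at hF'_card
  rw [bdist]
  omega

end Distance

section Chain

variable {Z : Set (Multiset (Multiset G))} {N : ℕ} {F F' F'' : Multiset (Multiset G)}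

theorem BIsNChain.of_bdist_le (hF : F ∈ Z) (hF' : F' ∈ Z) (h : bdist F F' ≤ N) :
    BIsNChain Z N F F' :=
  ⟨[F, F'], rfl, rfl, by simp [hF, hF'], List.isChain_pair.2 h⟩

theorem BIsNChain.symm (h : BIsNChain Z N F F') : BIsNChain Z N F' F := by
  obtain ⟨l, hhead, hlast, hmem, hchain⟩ := h
  refine ⟨l.reverse, by rwa [List.head?_reverse], by rwa [List.getLast?_reverse],
    by simpa using hmem, List.isChain_reverse.2 (hchain.imp fun x y hxy => ?_)⟩
  rwa [bdist_comm]

theorem BIsNChain.trans (h : BIsNChain Z N F F') (h' : BIsNChain Z N F' F'') :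
    BIsNChain Z N F F'' := by
  obtain ⟨l, hhead, hlast, hmem, hchain⟩ := h
  obtain ⟨l', hhead', hlast', hmem', hchain'⟩ := h'
  refine ⟨l ++ l', by simp [hhead], by simp [hlast'], ?_,
    List.isChain_append.2 ⟨hchain, hchain', ?_⟩⟩
  · exact fun x hx => (List.mem_append.1 hx).elim (hmem x) (hmem' x)
  · simp [hlast, hhead', bdist_self]

theorem BIsNChain.add_left {A B : Multiset G} {C : Multiset (Multiset G)} (hC : C ∈ BFact B)
    (h : BIsNChain (BFact A) N F F') : BIsNChain (BFact (B + A)) N (C + F) (C + F') := by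
  obtain ⟨l, hhead, hlast, hmem, hchain⟩ := h
  refine ⟨l.map (C + ·), by simp [hhead], by simp [hlast], ?_, ?_⟩
  · simpa using fun x hx => add_mem_bFact hC (hmem x hx)
  · exact (List.isChain_map _).2 (hchain.imp fun x y hxy => by rwa [bdist_add_left])

theorem BIsNChain.eq_of_pairwise_lt_bdist (h : BIsNChain Z N F F')
    (hZ : Z.Pairwise fun x y => N < bdist x y) : F = F' := by
  obtain ⟨l, hhead, hlast, hmem, hchain⟩ := h
  have hconst : l.IsChain (· = ·) := List.IsChain.imp_of_mem_imp
    (fun x y hx hy hxy => by_contra fun hne => (hZ (hmem x hx) (hmem y hy) hne).not_ge hxy) hchain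
  have hF' := List.mem_of_getLast? hlast
  rw [List.isChain_eq_iff_eq_replicate.1 hconst F hhead] at hF'
  exact (List.eq_of_mem_replicate hF').symm

theorem bIsNChain_of_forall_card_le (hN : ∀ s : Multiset G, IsMinZeroSum s → s.card ≤ N)
    (A : Multiset G) (hF : F ∈ BFact A) (hF' : F' ∈ BFact A) : BIsNChain (BFact A) N F F' := by
  induction A using Multiset.strongInductionOn generalizing F F' with | _ A ih =>
  by_cases hcard : F.card ≤ N ∧ F'.card ≤ N
  · exact .of_bdist_le hF hF' ((bdist_le_max_card F F').trans (max_le hcard.1 hcard.2))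
  wlog hlt : N < F'.card generalizing F F'
  · exact (this hF' hF (fun h => hcard h.symm) (by omega)).symm
  obtain ⟨s, hs⟩ : ∃ s, s ∈ F := by
    rw [← Multiset.card_pos_iff_exists_mem, card_pos_iff_of_mem_bFact hF,
      ← card_pos_iff_of_mem_bFact hF']
    omega
  have hsmin := hF.1 s hs
  obtain ⟨W, hWF', hWs, w, hw⟩ := exists_le_exists_cons_mem_bFact hF' hsmin (le_of_mem_bFact hF hs)
  obtain ⟨V, rfl⟩ := Multiset.le_iff_exists_add.1 hWF'
  obtain ⟨F₀, rfl⟩ := Multiset.exists_cons_of_mem hs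
  have hW := mem_bFact_sum_of_le hF' (Multiset.le_add_right W V)
  have hV := mem_bFact_sum_of_le hF' (Multiset.le_add_left V W)
  have hF₀ := mem_bFact_sum_of_le hF (Multiset.le_cons_self F₀ s)
  have hsA : s + F₀.sum = A := by rw [← hF.2, Multiset.sum_cons]
  have hVWA : V.sum + W.sum = A := by rw [← hF'.2, Multiset.sum_add, add_comm]
  have hwV : w + V ∈ BFact F₀.sum := by
    have := add_mem_bFact hw hV
    rw [add_comm W.sum, hVWA, ← hsA, Multiset.cons_add, cons_mem_bFact_add] at this
    exact this.2
  have hF₀_lt : F₀.sum < A := hsA ▸ lt_add_of_pos_left _ (pos_iff_ne_zero.2 hsmin.1)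
  have hW_lt : W.sum < A := by
    refine hVWA ▸ lt_add_of_pos_left _ ((card_pos_iff_of_mem_bFact hV).1 ?_)
    have := hN s hsmin
    rw [Multiset.card_add] at hlt
    omega
  have hstart : BIsNChain (BFact A) N (s ::ₘ F₀) (s ::ₘ (w + V)) := by
    have := (ih F₀.sum hF₀_lt hF₀ hwV).add_left (hsmin.bFact_eq.ge rfl)
    rwa [hsA, Multiset.singleton_add, Multiset.singleton_add] at this
  have hend : BIsNChain (BFact A) N (s ::ₘ (w + V)) (W + V) := by
    have := (ih W.sum hW_lt hw hW).add_left hV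
    rwa [hVWA, add_comm V, add_comm V, Multiset.cons_add] at this
  exact hstart.trans hend

end Chain

section CatenaryDegree

variable {A : Multiset G} {N : ℕ}

theorem bCatDeg_le (h : ∀ F ∈ BFact A, ∀ F' ∈ BFact A, BIsNChain (BFact A) N F F') :
    bCatDeg A ≤ N :=
  Nat.sInf_le h

theorem bIsNChain_bCatDeg
    (h : ∃ N, ∀ F ∈ BFact A, ∀ F' ∈ BFact A, BIsNChain (BFact A) N F F') :
    ∀ F ∈ BFact A, ∀ F' ∈ BFact A, BIsNChain (BFact A) (bCatDeg A) F F' :=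
  Nat.sInf_mem h

theorem bCatDeg_eq_zero_of_subsingleton (h : (BFact A).Subsingleton) : bCatDeg A = 0 :=
  Nat.le_zero.1 <| bCatDeg_le fun F hF F' hF' =>
    .of_bdist_le hF hF' (by rw [h hF hF', bdist_self])

theorem bCatDeg_ne_one (A : Multiset G) : bCatDeg A ≠ 1 := fun h1 => by
  have hchain := bIsNChain_bCatDeg (Nat.nonempty_of_sInf_eq_succ h1)
  rw [h1] at hchain
  have hsub : (BFact A).Subsingleton := fun F hF F' hF' =>
    (hchain F hF F' hF').eq_of_pairwise_lt_bdist (pairwise_one_lt_bdist A)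
  exact zero_ne_one ((bCatDeg_eq_zero_of_subsingleton hsub).symm.trans h1)

theorem bCatDeg_eq_bdist {F F' : Multiset (Multiset G)} (h : BFact A = {F, F'}) :
    bCatDeg A = bdist F F' := by
  have hchain : ∀ K ∈ BFact A, ∀ K' ∈ BFact A, BIsNChain (BFact A) (bdist F F') K K' := by
    refine fun K hK K' hK' => .of_bdist_le hK hK' ?_
    rw [h] at hK hK'
    rcases hK with rfl | rfl <;> rcases hK' with rfl | rfl <;> simp [bdist_self, bdist_comm]
  refine le_antisymm (bCatDeg_le hchain) (not_lt.1 fun hlt => ?_)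
  have hpair : (BFact A).Pairwise fun x y => bCatDeg A < bdist x y := by
    rw [h, Set.pairwise_pair, bdist_comm F' F]
    exact fun _ => ⟨hlt, hlt⟩
  obtain rfl : F = F' := (bIsNChain_bCatDeg ⟨_, hchain⟩ F (h.ge (.inl rfl)) F'
    (h.ge (.inr rfl))).eq_of_pairwise_lt_bdist hpair
  rw [bdist_self] at hlt
  exact Nat.not_lt_zero _ hlt

theorem bCatDeg_mem_of_forall_card_le (hN : ∀ s : Multiset G, IsMinZeroSum s → s.card ≤ N)
    (A : Multiset G) : bCatDeg A ∈ {0} ∪ Set.Icc 2 N := by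
  have hle : bCatDeg A ≤ N := bCatDeg_le fun F hF F' hF' => bIsNChain_of_forall_card_le hN A hF hF'
  have hne := bCatDeg_ne_one A
  simp only [Set.mem_union, Set.mem_singleton_iff, Set.mem_Icc]
  omega

end CatenaryDegree

section TwoFactorizations

/-- The zero-sum sequence `(dk g) (-d g)ᵏ gⁿ`, where `n` is the order of `g`. For `0 < dk < n` it
has just the factorizations `shortFact g d k` and `longFact g d k`. -/
noncomputable def twoFactSeq (g : G) (d k : ℕ) : Multiset G :=
  (d * k) • g ::ₘ
    (Multiset.replicate k (-(d • g)) + Multiset.replicate (addOrderOf g) g)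

/-- The factorization `((dk g) (-d g)ᵏ) · gⁿ` of `twoFactSeq g d k`, of length `2`. -/
noncomputable def shortFact (g : G) (d k : ℕ) : Multiset (Multiset G) :=
  {(d * k) • g ::ₘ Multiset.replicate k (-(d • g)), Multiset.replicate (addOrderOf g) g}

/-- The factorization `((dk g) gⁿ⁻ᵈᵏ) · ((-d g) gᵈ)ᵏ` of `twoFactSeq g d k`, of length `k + 1`. -/
noncomputable def longFact (g : G) (d k : ℕ) : Multiset (Multiset G) :=
  ((d * k) • g ::ₘ Multiset.replicate (addOrderOf g - d * k) g) ::ₘ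
    Multiset.replicate k (-(d • g) ::ₘ Multiset.replicate d g)

variable {g : G} {d k : ℕ}

theorem twoFactSeq_eq_add_replicate (g : G) (d k : ℕ) :
    twoFactSeq g d k = ((d * k) • g ::ₘ Multiset.replicate k (-(d • g))) +
      Multiset.replicate (addOrderOf g) g :=
  (Multiset.cons_add _ _ _).symm

theorem twoFactSeq_eq_add_nsmul (h : d * k ≤ addOrderOf g) :
    twoFactSeq g d k = ((d * k) • g ::ₘ Multiset.replicate (addOrderOf g - d * k) g) +
      k • (-(d • g) ::ₘ Multiset.replicate d g) := by
  rw [nsmul_cons_replicate, Multiset.cons_add, add_left_comm, ← Multiset.replicate_add,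
    Nat.sub_add_cancel h, twoFactSeq]

theorem sum_twoFactSeq (g : G) (d k : ℕ) : (twoFactSeq g d k).sum = 0 := by
  simp [twoFactSeq, mul_nsmul]

theorem addOrderOf_sub_nsmul {a : ℕ} (ha : a ≤ addOrderOf g) :
    (addOrderOf g - a) • g = -(a • g) := by
  rw [sub_nsmul g ha, addOrderOf_nsmul_eq_zero, zero_add]

theorem isMinZeroSum_nsmul_cons_replicate_self {a : ℕ} (ha : 0 < a) (han : a ≤ addOrderOf g) :
    IsMinZeroSum (a • g ::ₘ Multiset.replicate (addOrderOf g - a) g) := by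
  simpa using isMinZeroSum_nsmul_cons_replicate_nsmul (g := g) (d := 1)
    (k := addOrderOf g - a) ha one_pos (by omega)

theorem isMinZeroSum_neg_nsmul_cons_replicate (hd : d < addOrderOf g) :
    IsMinZeroSum (-(d • g) ::ₘ Multiset.replicate d g) := by
  have := isMinZeroSum_nsmul_cons_replicate_self (g := g) (Nat.sub_pos_of_lt hd) (Nat.sub_le _ _)
  rwa [addOrderOf_sub_nsmul hd.le, Nat.sub_sub_self hd.le] at this

theorem isMinZeroSum_nsmul_cons_replicate_neg_nsmul (hd : 0 < d) (hdk : d * k < addOrderOf g) :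
    IsMinZeroSum ((d * k) • g ::ₘ Multiset.replicate k (-(d • g))) := by
  have := isMinZeroSum_nsmul_cons_replicate_nsmul (g := -g) (a := addOrderOf (-g) - d * k)
    (d := d) (k := k) (by rw [addOrderOf_neg]; omega) hd (by rw [addOrderOf_neg]; omega)
  rwa [addOrderOf_sub_nsmul (by rw [addOrderOf_neg]; omega), neg_nsmul, neg_nsmul, neg_neg]
    at this

theorem nsmul_add_sum_eq_zero_iff_modEq {a x y : ℕ} :
    a • g + (Multiset.replicate y (-(d • g)) + Multiset.replicate x g).sum = 0 ↔
      a + x ≡ d * y [MOD addOrderOf g] := by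
  rw [← nsmul_eq_nsmul_iff_modEq, Multiset.sum_add, Multiset.sum_replicate,
    Multiset.sum_replicate, neg_nsmul, add_left_comm, neg_add_eq_zero, ← add_nsmul, mul_nsmul,
    eq_comm]

theorem IsMinZeroSum.eq_of_neg_nsmul_cons_le {t : Multiset G} (ht : IsMinZeroSum t)
    (h : -(d • g) ::ₘ Multiset.replicate d g ≤ t) : t = -(d • g) ::ₘ Multiset.replicate d g :=
  (ht.eq_of_le h Multiset.cons_ne_zero (by simp)).symm

theorem neg_nsmul_cons_le_replicate_add_replicate {x y : ℕ} (hy : 0 < y) (hx : d ≤ x) :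
    -(d • g) ::ₘ Multiset.replicate d g ≤
      Multiset.replicate y (-(d • g)) + Multiset.replicate x g := by
  rw [← Multiset.singleton_add, ← Multiset.replicate_one]
  exact add_le_add (Multiset.replicate_mono _ hy) (Multiset.replicate_mono _ hx)

theorem IsMinZeroSum.eq_of_le_nsmul {t : Multiset G} (hdk : d * k < addOrderOf g)
    (ht : IsMinZeroSum t) (h : t ≤ k • (-(d • g) ::ₘ Multiset.replicate d g)) :
    t = -(d • g) ::ₘ Multiset.replicate d g := by
  rw [nsmul_cons_replicate] at h
  obtain ⟨y, hy, x, hx, rfl⟩ := exists_eq_add_of_le_replicate_add_replicate h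
  have hmod := (nsmul_add_sum_eq_zero_iff_modEq (a := 0)).1 (by simpa using ht.2.1)
  rw [zero_add] at hmod
  obtain rfl : x = d * y :=
    hmod.eq_of_lt_of_lt (hx.trans_lt hdk) ((Nat.mul_le_mul_left d hy).trans_lt hdk)
  have hy0 : 0 < y := Nat.pos_of_ne_zero fun h0 => ht.1 (by simp [h0])
  exact ht.eq_of_neg_nsmul_cons_le
    (neg_nsmul_cons_le_replicate_add_replicate hy0 (Nat.le_mul_of_pos_right d hy0))

theorem IsMinZeroSum.eq_or_eq_of_nsmul_cons_le {t : Multiset G} (hpos : 0 < d * k)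
    (hdk : d * k < addOrderOf g) (ht : IsMinZeroSum ((d * k) • g ::ₘ t))
    (h : t ≤ Multiset.replicate k (-(d • g)) + Multiset.replicate (addOrderOf g) g) :
    t = Multiset.replicate k (-(d • g)) ∨ t = Multiset.replicate (addOrderOf g - d * k) g := by
  obtain ⟨y, hy, x, hx, rfl⟩ := exists_eq_add_of_le_replicate_add_replicate h
  have hmod := nsmul_add_sum_eq_zero_iff_modEq.1 ((Multiset.sum_cons _ _).symm.trans ht.2.1)
  rcases Nat.eq_zero_or_pos y with rfl | hy0
  · right
    have hdvd : addOrderOf g ∣ d * k + x := Nat.modEq_zero_iff_dvd.1 hmod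
    have hle := Nat.le_of_dvd (by omega) hdvd
    have := Nat.eq_zero_of_dvd_of_lt (Nat.dvd_sub hdvd dvd_rfl) (by omega)
    rw [Multiset.replicate_zero, zero_add, show x = addOrderOf g - d * k by omega]
  rcases lt_or_ge x d with hxd | hxd
  · left
    obtain ⟨j, rfl⟩ := Nat.le.dest hy
    rw [mul_add] at hdk hmod
    have hdy : d ≤ d * y := Nat.le_mul_of_pos_right d hy0
    have hzero : d * j + x = 0 := by
      rw [add_assoc, Nat.add_modEq_left_iff] at hmod
      exact Nat.eq_zero_of_dvd_of_lt hmod (by omega)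
    obtain ⟨hj, rfl⟩ := Nat.add_eq_zero_iff.1 hzero
    obtain rfl : j = 0 := (Nat.mul_eq_zero.1 hj).resolve_left (by omega)
    simp
  · have hle : -(d • g) ::ₘ Multiset.replicate d g ≤
        Multiset.replicate y (-(d • g)) + Multiset.replicate x g :=
      neg_nsmul_cons_le_replicate_add_replicate hy0 hxd
    have hcard := Multiset.card_le_card hle
    rw [← ht.eq_of_neg_nsmul_cons_le (hle.trans (Multiset.le_cons_self _ _)),
      Multiset.card_cons] at hcard
    omega

theorem bFact_twoFactSeq (hpos : 0 < d * k) (hdk : d * k < addOrderOf g) :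
    BFact (twoFactSeq g d k) = {shortFact g d k, longFact g d k} := by
  obtain ⟨hd, hk⟩ := CanonicallyOrderedAdd.mul_pos.1 hpos
  have hdg : d < addOrderOf g := (Nat.le_mul_of_pos_right d hk).trans_lt hdk
  have hrep := (isMinZeroSum_replicate_addOrderOf (g := g) (by omega)).bFact_eq
  have hnsmul := bFact_nsmul (isMinZeroSum_neg_nsmul_cons_replicate hdg) (k := k)
    fun t h ht => ht.eq_of_le_nsmul hdk h
  refine Set.Subset.antisymm (fun K hK => ?_) (Set.pair_subset ?_ ?_)
  · obtain ⟨t, ht, K, rfl⟩ := exists_eq_cons_cons_of_mem_bFact hK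
    have hmin := hK.1 _ (Multiset.mem_cons_self _ K)
    rcases hmin.eq_or_eq_of_nsmul_cons_le hpos hdk ht with rfl | rfl
    · rw [twoFactSeq_eq_add_replicate, cons_mem_bFact_add, hrep] at hK
      exact .inl (congrArg _ hK.2)
    · rw [twoFactSeq_eq_add_nsmul hdk.le, cons_mem_bFact_add, hnsmul] at hK
      exact .inr (congrArg _ hK.2)
  · rw [twoFactSeq_eq_add_replicate]
    exact cons_mem_bFact_add.2
      ⟨isMinZeroSum_nsmul_cons_replicate_neg_nsmul hd hdk, hrep.ge rfl⟩
  · rw [twoFactSeq_eq_add_nsmul hdk.le]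
    exact cons_mem_bFact_add.2
      ⟨isMinZeroSum_nsmul_cons_replicate_self hpos hdk.le, hnsmul.ge rfl⟩

theorem shortFact_ne_longFact (hd : d + 1 < addOrderOf g) (hdk : 1 < d * k)
    (hdkg : d * k < addOrderOf g) : shortFact g d k ≠ longFact g d k := fun h => by
  have hmem : Multiset.replicate (addOrderOf g) g ∈ longFact g d k := by
    rw [← h]
    simp [shortFact]
  have hcard : addOrderOf g = addOrderOf g - d * k + 1 ∨ addOrderOf g = d + 1 := by
    rcases Multiset.mem_cons.1 hmem with heq | hmem
    · exact .inl (by simpa using congrArg Multiset.card heq)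
    · exact .inr (by simpa using congrArg Multiset.card (Multiset.eq_of_mem_replicate hmem))
  omega

theorem bCatDeg_twoFactSeq (hd : d + 1 < addOrderOf g) (hdk : 1 < d * k)
    (hdkg : d * k < addOrderOf g) : bCatDeg (twoFactSeq g d k) = k + 1 := by
  have h := bFact_twoFactSeq (g := g) (by omega) hdkg
  rw [bCatDeg_eq_bdist h, bdist_eq_card_of_card_eq_two (h.ge (by simp)) (h.ge (by simp))
    (shortFact_ne_longFact hd hdk hdkg) (by simp [shortFact])]
  simp [longFact]

theorem exists_bCatDeg_eq (hg : 4 ≤ addOrderOf g) {c : ℕ}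
    (hc : c ∈ {0} ∪ Set.Icc 2 (addOrderOf g)) :
    ∃ A : Multiset G, A.sum = 0 ∧ bCatDeg A = c := by
  rcases hc with rfl | ⟨h2, hcg⟩
  · exact ⟨0, rfl, bCatDeg_eq_zero_of_subsingleton (by simp [bFact_zero])⟩
  rcases h2.eq_or_lt with rfl | h3
  · exact ⟨twoFactSeq g 2 1, sum_twoFactSeq g 2 1,
      bCatDeg_twoFactSeq (by omega) (by omega) (by omega)⟩
  · obtain ⟨k, rfl⟩ : ∃ k, c = k + 1 := ⟨c - 1, by omega⟩
    exact ⟨twoFactSeq g 1 k, sum_twoFactSeq g 1 k,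
      bCatDeg_twoFactSeq (by omega) (by omega) (by omega)⟩

end TwoFactorizations

end BlockMonoid

/-- For G cyclic of order n ≥ 4, the set of catenary degrees of the block monoid
B(G) is {0, 2, 3, ..., n}. -/
theorem catSet_block_monoid {G : Type*} [AddCommGroup G] [Fintype G]
    [IsAddCyclic G] (n : ℕ) (hn : 4 ≤ n) (hcard : Fintype.card G = n) :
    {c | ∃ A : Multiset G, A.sum = 0 ∧ bCatDeg A = c} = {0} ∪ Set.Icc 2 n := by
  have hN (s : Multiset G) (hs : IsMinZeroSum s) : s.card ≤ n := hcard ▸ hs.card_le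
  obtain ⟨g, hg⟩ := IsAddCyclic.exists_ofOrder_eq_natCard (α := G)
  obtain rfl : addOrderOf g = n := by rw [hg, Nat.card_eq_fintype_card, hcard]
  refine Set.Subset.antisymm ?_ fun c => exists_bCatDeg_eq hn
  rintro _ ⟨A, -, rfl⟩
  exact bCatDeg_mem_of_forall_card_le hN A
end
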